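/- arXiv:2007.04835 — 2 statements merged into one kernel-verified Lean document; each statement's English description precedes it below -/
import Mathlib

section
/- Let n ≥ 0 be a natural number, d a nonzero integer, and m_0, …, m_n integers with m_j ≠ −d for every j. Then the following identity holds in ℚ: ∑_{J ⊆ {0,…,n}} (∏_{j∈J} (−m_j)/(m_j+d)) · (n+1−|J|) = (∏_{j=0}^n (m_j+d))^{−1} · d^n · ∑_{j=0}^n (m_j+d). (This is the computation of the weighted Euler characteristic χ_d(ℂPⁿ, D_{m_0,…,m_n}) in Lemma 3.7 of the paper: for the divisor D = ∑_j m_j H_j supported on the coordinate hyperplanes H_j of ℂPⁿ, each stratum D_J = ∩_{j∈J} H_j is a projective space with topological Euler characteristic n+1−|J|, and χ_d(X,D) := ∑_J w_d^J χ(D_J) with weights w_d^J = ∏_{j∈J}(−m_j)/(m_j+d).) -/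
/-!
The number `n + 1 - |J|` counts the indices `i ∉ J`. Exchanging the two summations, the left side
becomes `∑ i, ∑_{J ∌ i} ∏_{j ∈ J} w j`, and for each `i` the inner sum is the expansion of
`∏_{j ≠ i} (1 + w j)` (`sum_powerset_prod_mul_card_sub`). With `w j = -m j / (m j + d)` one has
`1 + w j = d / (m j + d)`, so the `i`-th term is `d ^ n * (m i + d) / ∏ j, (m j + d)`.
-/

open Finset

/-- The derivative at `t = 1` of `∏ i, (t + w i) = ∑ J, t ^ (|ι| - |J|) * ∏ j ∈ J, w j`. -/
lemma sum_powerset_prod_mul_card_sub {ι R : Type*} [Fintype ι] [DecidableEq ι] [CommRing R]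
    (w : ι → R) :
    ∑ J ∈ (univ : Finset ι).powerset, (∏ j ∈ J, w j) * ((Fintype.card ι : R) - J.card)
      = ∑ i, ∏ j ∈ univ.erase i, (1 + w j) := by
  have hcard (J : Finset ι) :
      (Fintype.card ι : R) - J.card = ∑ i, if i ∉ J then 1 else 0 := by
    rw [sum_boole, filter_notMem_eq_sdiff, ← compl_eq_univ_sdiff, card_compl,
      Nat.cast_sub (card_le_univ J)]
  simp_rw [hcard, mul_sum]
  rw [sum_comm]
  refine sum_congr rfl fun i _ => ?_
  simp_rw [mul_ite, mul_one, mul_zero]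
  rw [← sum_filter, prod_one_add]
  refine sum_congr ?_ fun _ _ => rfl
  ext J
  simp [subset_erase]

/-- Lemma 3.7 (Euler characteristic of the weighted sum over strata on ℂPⁿ):
for a nonzero integer `d` and integers `m_0, …, m_n` with `m_j ≠ -d`,
`∑_{J ⊆ {0,…,n}} (∏_{j∈J} (-m_j)/(m_j+d)) (n+1-|J|)
  = (∏_j (m_j+d))⁻¹ dⁿ ∑_j (m_j+d)` in `ℚ`. -/
theorem chi_d_projective_space (n : ℕ) (d : ℤ) (hd : d ≠ 0)
    (m : Fin (n + 1) → ℤ) (hm : ∀ j, m j ≠ -d) :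
    ∑ J ∈ (univ : Finset (Fin (n + 1))).powerset,
        (∏ j ∈ J, (-(m j : ℚ)) / ((m j : ℚ) + (d : ℚ))) * ((n : ℚ) + 1 - J.card)
      = (∏ j, ((m j : ℚ) + (d : ℚ)))⁻¹ * (d : ℚ) ^ n *
          ∑ j, ((m j : ℚ) + (d : ℚ)) := by
  have ha (j) : (m j : ℚ) + d ≠ 0 := by
    have := hm j
    exact_mod_cast fun h => this (eq_neg_of_add_eq_zero_left h)
  have hw (j) : 1 + (-(m j : ℚ)) / ((m j : ℚ) + d) = d / ((m j : ℚ) + d) := by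
    have := ha j
    field_simp
    ring
  have key := sum_powerset_prod_mul_card_sub fun j => (-(m j : ℚ)) / ((m j : ℚ) + d)
  rw [Fintype.card_fin, Nat.cast_add_one] at key
  rw [key, mul_sum]
  refine sum_congr rfl fun i _ => ?_
  simp_rw [hw]
  rw [prod_div_distrib, prod_const, card_erase_of_mem (mem_univ i), card_univ, Fintype.card_fin,
    Nat.add_sub_cancel, ← mul_prod_erase univ _ (mem_univ i)]
  have := ha i
  have : ∏ j ∈ univ.erase i, ((m j : ℚ) + d) ≠ 0 := prod_ne_zero_iff.2 fun j _ => ha j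
  field_simp
end

section
/- Let P, Q be polynomials with real coefficients and p, q natural numbers such that coeff_k(P) = coeff_{2p−k}(P) and coeff_k(Q) = coeff_{2q−k}(Q) for all k (all coefficients of P of degree > 2p and of Q of degree > 2q vanish). Define E(P) := P″(−1) − p²·P(−1) and E(Q) := Q″(−1) − q²·Q(−1). Then E(PQ) = Q(−1)·E(P) + P(−1)·E(Q), where E(PQ) := (PQ)″(−1) − (p+q)²·(PQ)(−1). (This is the algebraic content of the claim in Example 3.3 that χ″ is a log-type invariant: for a projective bundle ℙ(V) → X of fiber dimension r−1, the Poincaré polynomial multiplies, P_t(ℙ(V)) = P_t(X)·P_t(ℂP^{r−1}), and taking the second logarithmic derivative at t = −1 yields χ″(ℙ(V)) = χ(ℂP^{r−1})·χ″(X) + χ(X)·χ″(ℂP^{r−1}).) -/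
open Polynomial

/-!
The second-order Leibniz rule leaves the cross term `2 P'(-1) Q'(-1)`, while expanding `(p + q)²`
leaves `2 p q P(-1) Q(-1)`. These cancel because palindromicity forces `P'(-1) = -p P(-1)` and
`Q'(-1) = -q Q(-1)` (`eval_derivative_neg_one_of_palindromic`).
-/

/-- Euler-type relation at `-1` for a polynomial `P = ∑ a_k X^k` palindromic about degree `p`.
Indeed `P'(-1) + p P(-1) = ∑ k ≤ 2p, (-1)^k (p - k) a_k`, and the substitution `k ↦ 2p - k` changes
the sign of each summand. -/
theorem eval_derivative_neg_one_of_palindromic (P : Polynomial ℝ) (p : ℕ)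
    (hsym : ∀ k : ℕ, k ≤ 2 * p → P.coeff k = P.coeff (2 * p - k))
    (hvan : ∀ k : ℕ, 2 * p < k → P.coeff k = 0) :
    P.derivative.eval (-1) = -(p : ℝ) * P.eval (-1) := by
  have hdeg : P.natDegree < 2 * p + 1 :=
    Nat.lt_succ_of_le (natDegree_le_iff_coeff_eq_zero.2 hvan)
  have hsum : P.derivative.eval (-1) + p * P.eval (-1)
      = ∑ k ∈ Finset.range (2 * p + 1), P.coeff k * (-1) ^ k * ((p : ℝ) - k) := by
    rw [derivative_eval, P.sum_over_range' (by simp) _ hdeg, eval_eq_sum_range' hdeg,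
      Finset.mul_sum, ← Finset.sum_add_distrib]
    refine Finset.sum_congr rfl fun k _ => ?_
    cases k with
    | zero => simp; ring
    | succ k => rw [Nat.add_sub_cancel, pow_succ]; ring
  have hanti : ∑ k ∈ Finset.range (2 * p + 1), P.coeff k * (-1) ^ k * ((p : ℝ) - k)
      = -∑ k ∈ Finset.range (2 * p + 1), P.coeff k * (-1) ^ k * ((p : ℝ) - k) := by
    conv_lhs => rw [← Finset.sum_range_reflect]
    rw [← Finset.sum_neg_distrib]
    refine Finset.sum_congr rfl fun k hk => ?_
    have hk' : k ≤ 2 * p := Nat.lt_succ_iff.1 (Finset.mem_range.1 hk)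
    have hpow : (-1 : ℝ) ^ (2 * p - k) = (-1) ^ k :=
      neg_one_pow_congr (by rw [Nat.even_sub hk']; simp)
    rw [Nat.add_sub_cancel, ← hsym k hk', hpow, Nat.cast_sub hk']
    push_cast
    ring
  linarith

/-- Example 3.3 (log-type property of `χ''`): for real polynomials `P`, `Q`
palindromic about degrees `p`, `q` respectively, setting
`E(P) = P''(-1) - p² P(-1)` etc., one has the Leibniz-type rule
`E(PQ) = Q(-1) E(P) + P(-1) E(Q)` where `E(PQ) = (PQ)''(-1) - (p+q)² (PQ)(-1)`. -/
theorem palindromic_logtype_product_rule (P Q : Polynomial ℝ) (p q : ℕ)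
    (hsymP : ∀ k : ℕ, k ≤ 2 * p → P.coeff k = P.coeff (2 * p - k))
    (hvanP : ∀ k : ℕ, 2 * p < k → P.coeff k = 0)
    (hsymQ : ∀ k : ℕ, k ≤ 2 * q → Q.coeff k = Q.coeff (2 * q - k))
    (hvanQ : ∀ k : ℕ, 2 * q < k → Q.coeff k = 0) :
    (P * Q).derivative.derivative.eval (-1) - ((p : ℝ) + q) ^ 2 * (P * Q).eval (-1)
      = Q.eval (-1) * (P.derivative.derivative.eval (-1) - (p : ℝ) ^ 2 * P.eval (-1))
        + P.eval (-1) * (Q.derivative.derivative.eval (-1) - (q : ℝ) ^ 2 * Q.eval (-1)) := by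
  have hP := eval_derivative_neg_one_of_palindromic P p hsymP hvanP
  have hQ := eval_derivative_neg_one_of_palindromic Q q hsymQ hvanQ
  simp only [derivative_mul, derivative_add, eval_add, eval_mul, hP, hQ]
  ring
end
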